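/- Let 2 ≤ p < ∞. For every real sequence (x_n)_{n≥1} with ∑_{n=1}^∞ |x_n|^p < ∞, setting y_n = ∑_{k=n}^∞ x_k/k, one has ∑_{n=1}^∞ |y_n - x_n|^p ≤ (p-1)^p · ∑_{n=1}^∞ |x_n|^p; moreover (p-1)^p is the least such constant: for every c < (p-1)^p there exists a real sequence (x_n) with 0 < ∑_{n=1}^∞ |x_n|^p < ∞ and ∑_{n=1}^∞ |y_n - x_n|^p > c · ∑_{n=1}^∞ |x_n|^p. That is, the operator norm of C^T - I on ℓ^p equals p - 1. -/

import Mathlib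

lemma aux_log (y : ℝ) (hy : 1 ≤ y) : Real.log y ≤ (y - y⁻¹) / 2 := by
  have h0 : 0 < y := by linarith
  have h := Real.self_le_sinh_iff.mpr (Real.log_nonneg hy)
  rwa [Real.sinh_eq, Real.exp_neg, Real.exp_log h0] at h

lemma aux_q (q : ℝ) (hq : 1 ≤ q) : q * (Real.log (q + 2) - Real.log q) ≤ Real.log (2 * q + 1) := by
  have hd : ∀ x : ℝ, 0 < x → HasDerivAt
      (fun q : ℝ => Real.log (2 * q + 1) - q * (Real.log (q + 2) - Real.log q))
      (2 / (2 * x + 1) - (1 * (Real.log (x + 2) - Real.log x) + x * (1 / (x + 2) - 1 / x))) x := by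
    intro x hx
    have h1 : HasDerivAt (fun q : ℝ => 2 * q + 1) 2 x := by
      simpa using ((hasDerivAt_id x).const_mul 2).add_const 1
    have h2 : HasDerivAt (fun q : ℝ => q + 2) 1 x := (hasDerivAt_id x).add_const 2
    have h3 : HasDerivAt (fun q : ℝ => q) 1 x := hasDerivAt_id x
    exact (h1.log (by positivity)).sub (h3.mul ((h2.log (by positivity)).sub (h3.log hx.ne')))
  have hm : MonotoneOn (fun q : ℝ => Real.log (2 * q + 1) - q * (Real.log (q + 2) - Real.log q))
      (Set.Ici 1) := by
    apply monotoneOn_of_deriv_nonneg (convex_Ici 1)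
    · intro x hx
      have : (1:ℝ) ≤ x := hx
      exact (hd x (by linarith)).continuousAt.continuousWithinAt
    · intro x hx
      rw [interior_Ici] at hx
      have : (1:ℝ) < x := hx
      exact (hd x (by linarith)).differentiableAt.differentiableWithinAt
    · intro x hx
      rw [interior_Ici] at hx
      have hx1 : (1:ℝ) < x := hx
      have hx0 : 0 < x := by linarith
      rw [(hd x hx0).deriv]
      have hl := aux_log ((x + 2) / x) (by rw [le_div_iff₀ hx0]; linarith)
      rw [Real.log_div (by positivity) hx0.ne'] at hl
      have e : 2 / (2 * x + 1) - (1 * (((x + 2) / x - ((x + 2) / x)⁻¹) / 2) + x * (1 / (x + 2) - 1 / x))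
          = 2 * (x ^ 2 - 1) / ((2 * x + 1) * (x * (x + 2))) := by
        field_simp
        ring
      have : 0 ≤ 2 * (x ^ 2 - 1) / ((2 * x + 1) * (x * (x + 2))) := by
        apply div_nonneg
        · nlinarith
        · positivity
      linarith
  have := hm (Set.mem_Ici.mpr le_rfl) (Set.mem_Ici.mpr hq) hq
  norm_num at this
  linarith

lemma aux_q2 (p : ℝ) (hp : 2 ≤ p) : (p + 1) ^ p ≤ (p - 1) ^ (p - 1) * ((2 * p - 1) * (p + 1)) := by
  have h := aux_q (p - 1) (by linarith)
  have h1 : (0:ℝ) < p + 1 := by linarith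
  have h2 : (0:ℝ) < p - 1 := by linarith
  have h3 : (0:ℝ) < 2 * p - 1 := by linarith
  rw [← Real.log_le_log_iff (by positivity) (by positivity), Real.log_rpow h1,
    Real.log_mul (by positivity) (by positivity), Real.log_mul h3.ne' h1.ne', Real.log_rpow h2]
  rw [show p - 1 + 2 = p + 1 by ring, show 2 * (p - 1) + 1 = 2 * p - 1 by ring] at h
  linarith

lemma abs_rpow_mul (p y : ℝ) (hp : 2 ≤ p) : |y| ^ (p - 2) * y = |y| ^ p / y := by
  rcases eq_or_ne y 0 with rfl | hy
  · simp
  · have : |y| ^ p = |y| ^ (p - 2) * y ^ 2 := by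
      rw [← sq_abs, ← Real.rpow_natCast |y| 2, ← Real.rpow_add (abs_pos.mpr hy)]
      congr 1; push_cast; ring
    rw [this]; field_simp

lemma abs_rpow_sq (p y : ℝ) (hp : 2 ≤ p) : |y| ^ (p - 2) * y * y = |y| ^ p := by
  rcases eq_or_ne y 0 with rfl | hy
  · rw [abs_zero, Real.zero_rpow (show p ≠ 0 by linarith)]; simp
  · rw [abs_rpow_mul p y hp]; field_simp

noncomputable def Kc (p : ℝ) : ℝ := (p - 1) ^ (p - 1) * p ^ (2 - p)

lemma Kc_nonneg (p : ℝ) (hp : 2 ≤ p) : 0 ≤ Kc p := by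
  have : (0:ℝ) ≤ p - 1 := by linarith
  have : (0:ℝ) ≤ p := by linarith
  unfold Kc; positivity

lemma Kc_mul (p : ℝ) (hp : 2 ≤ p) : Kc p * (p - 1) * p ^ (p - 2) = (p - 1) ^ p := by
  have h2 : (0:ℝ) < p - 1 := by linarith
  have h0 : (0:ℝ) < p := by linarith
  have e1 : (p - 1) ^ p = (p - 1) ^ (p - 1) * (p - 1) := by
    rw [← Real.rpow_add_one h2.ne']; congr 1; ring
  have e2 : p ^ (2 - p) * p ^ (p - 2) = 1 := by
    rw [← Real.rpow_add h0]; simp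
  rw [e1]; unfold Kc
  linear_combination ((p - 1) ^ (p - 1) * (p - 1)) * e2

noncomputable def ff (p x : ℝ) : ℝ :=
  (p - 1) ^ p * |x| ^ p - 1 + Kc p * (|1 + x| ^ (p - 2) * (1 + x)) * (1 - (p - 1) * x)

lemma ff_cont (p : ℝ) (hp : 2 ≤ p) : Continuous (ff p) := by
  unfold ff
  have h1 : Continuous fun x : ℝ => |x| ^ p :=
    continuous_abs.rpow_const (fun _ => Or.inr (by linarith))
  have h2 : Continuous fun x : ℝ => |1 + x| ^ (p - 2) :=
    (continuous_abs.comp (continuous_const.add continuous_id)).rpow_const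
      (fun _ => Or.inr (by linarith))
  fun_prop

lemma ff_deriv (p : ℝ) (hp : 2 ≤ p) (x : ℝ) (hx : 1 + x ≠ 0) :
    HasDerivAt (ff p) (p * Kc p * (p - 1) * x * ((p * |x|) ^ (p - 2) - |1 + x| ^ (p - 2))) x := by
  have h1 : HasDerivAt (fun x : ℝ => |x| ^ p) (p * |x| ^ (p - 2) * x) x :=
    hasDerivAt_abs_rpow x (by linarith)
  have h2 : HasDerivAt (fun x : ℝ => 1 + x) 1 x := (hasDerivAt_id x).const_add 1
  have h3 : HasDerivAt (fun x : ℝ => |1 + x| ^ p) (p * |1 + x| ^ (p - 2) * (1 + x) * 1) x :=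
    (hasDerivAt_abs_rpow (1 + x) (p := p) (by linarith)).comp x h2
  have h4 := h3.div h2 hx
  have h5 : HasDerivAt (fun x : ℝ => 1 - (p - 1) * x) (-((p - 1) * 1)) x :=
    ((hasDerivAt_id x).const_mul (p - 1)).const_sub 1
  have h6 := ((h1.const_mul ((p - 1) ^ p)).sub_const 1).add ((h4.const_mul (Kc p)).mul h5)
  have hfun : ff p = (fun x => (p - 1) ^ p * |x| ^ p - 1) +
      (fun x => Kc p * (|1 + x| ^ p / (1 + x))) * (fun x => 1 - (p - 1) * x) := by
    funext z
    simp only [ff, Pi.add_apply, Pi.mul_apply, abs_rpow_mul p (1 + z) hp]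
  rw [hfun]
  refine h6.congr_deriv ?_
  simp only [Pi.div_apply]
  rw [← Kc_mul p hp, Real.mul_rpow (by linarith) (abs_nonneg x), ← abs_rpow_sq p (1 + x) hp]
  field_simp
  ring

lemma ff_pos1 (p : ℝ) (hp : 2 ≤ p) : 0 ≤ ff p (1 / (p - 1)) := by
  have h2 : (0:ℝ) < p - 1 := by linarith
  unfold ff
  rw [abs_of_pos (by positivity), mul_one_div_cancel h2.ne', one_div, Real.inv_rpow h2.le,
    mul_inv_cancel₀ (by positivity)]
  simp

lemma ff_pos2 (p : ℝ) (hp : 2 ≤ p) : 0 ≤ ff p (-(1 / (p + 1))) := by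
  have h2 : (0:ℝ) < p - 1 := by linarith
  have h1 : (0:ℝ) < p + 1 := by linarith
  have h0 : (0:ℝ) < p := by linarith
  unfold ff
  have e : 1 + -(1 / (p + 1)) = p / (p + 1) := by field_simp; ring
  have e' : 1 - (p - 1) * -(1 / (p + 1)) = 2 * p / (p + 1) := by field_simp; ring
  rw [e, e', abs_neg, abs_of_pos (by positivity), abs_of_pos (by positivity), one_div,
    Real.inv_rpow h1.le, Real.div_rpow h0.le h1.le]
  have e1 : (p - 1) ^ p = (p - 1) ^ (p - 1) * (p - 1) := by
    rw [← Real.rpow_add_one h2.ne']; congr 1; ring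
  have e2 : p ^ (2 - p) * p ^ (p - 2) = 1 := by
    rw [← Real.rpow_add h0]; simp
  have e3 : (p + 1) ^ p = (p + 1) ^ (p - 2) * (p + 1) ^ 2 := by
    rw [← Real.rpow_natCast, ← Real.rpow_add h1]; congr 1; push_cast; ring
  have h := aux_q2 p hp
  have key : (p - 1) ^ p * ((p + 1) ^ p)⁻¹ - 1 + Kc p * (p ^ (p - 2) / (p + 1) ^ (p - 2) * (p / (p + 1))) * (2 * p / (p + 1))
     = ((p - 1) ^ (p - 1) * ((2 * p - 1) * (p + 1)) - (p + 1) ^ p) / (p + 1) ^ p := by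
    have hP : 0 < (p + 1) ^ (p - 2) := by positivity
    unfold Kc
    rw [e1, e3]
    field_simp
    linear_combination (2 * p ^ 2 * (p - 1) ^ (p - 1)) * e2
  rw [key]
  apply div_nonneg (by linarith) (by positivity)

lemma ff_mono (p : ℝ) (hp : 2 ≤ p) (s : Set ℝ) (hs : Convex ℝ s)
    (h : ∀ x ∈ interior s, 1 + x ≠ 0 ∧ ((0 ≤ x ∧ |1 + x| ≤ p * |x|) ∨ (x ≤ 0 ∧ p * |x| ≤ |1 + x|))) :
    MonotoneOn (ff p) s := by
  apply monotoneOn_of_deriv_nonneg hs (ff_cont p hp).continuousOn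
  · intro x hx
    exact (ff_deriv p hp x (h x hx).1).differentiableAt.differentiableWithinAt
  · intro x hx
    rw [(ff_deriv p hp x (h x hx).1).deriv]
    have hc : 0 ≤ p * Kc p * (p - 1) :=
      mul_nonneg (mul_nonneg (by linarith) (Kc_nonneg p hp)) (by linarith)
    rcases (h x hx).2 with ⟨h1, h2⟩ | ⟨h1, h2⟩
    · apply mul_nonneg (mul_nonneg hc h1)
      exact sub_nonneg.mpr (Real.rpow_le_rpow (abs_nonneg _) h2 (by linarith))
    · apply mul_nonneg_of_nonpos_of_nonpos (mul_nonpos_of_nonneg_of_nonpos hc h1)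
      exact sub_nonpos.mpr (Real.rpow_le_rpow (mul_nonneg (by linarith) (abs_nonneg _)) h2 (by linarith))

lemma ff_anti (p : ℝ) (hp : 2 ≤ p) (s : Set ℝ) (hs : Convex ℝ s)
    (h : ∀ x ∈ interior s, 1 + x ≠ 0 ∧ ((x ≤ 0 ∧ |1 + x| ≤ p * |x|) ∨ (0 ≤ x ∧ p * |x| ≤ |1 + x|))) :
    AntitoneOn (ff p) s := by
  apply antitoneOn_of_deriv_nonpos hs (ff_cont p hp).continuousOn
  · intro x hx
    exact (ff_deriv p hp x (h x hx).1).differentiableAt.differentiableWithinAt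
  · intro x hx
    rw [(ff_deriv p hp x (h x hx).1).deriv]
    have hc : 0 ≤ p * Kc p * (p - 1) :=
      mul_nonneg (mul_nonneg (by linarith) (Kc_nonneg p hp)) (by linarith)
    rcases (h x hx).2 with ⟨h1, h2⟩ | ⟨h1, h2⟩
    · apply mul_nonpos_of_nonpos_of_nonneg (mul_nonpos_of_nonneg_of_nonpos hc h1)
      exact sub_nonneg.mpr (Real.rpow_le_rpow (abs_nonneg _) h2 (by linarith))
    · apply mul_nonpos_of_nonneg_of_nonpos (mul_nonneg hc h1)
      exact sub_nonpos.mpr (Real.rpow_le_rpow (mul_nonneg (by linarith) (abs_nonneg _)) h2 (by linarith))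

lemma ff_nonneg (p : ℝ) (hp : 2 ≤ p) (x : ℝ) : 0 ≤ ff p x := by
  have h2 : (0:ℝ) < p - 1 := by linarith
  have h1 : (0:ℝ) < p + 1 := by linarith
  have hb : 0 < 1 / (p - 1) := by positivity
  have ha : 0 < 1 / (p + 1) := by positivity
  have ha1 : 1 / (p + 1) < 1 := by rw [div_lt_one h1]; linarith
  rcases le_total x (-(1 / (p + 1))) with hx | hx
  · have hA : AntitoneOn (ff p) (Set.Icc (-1) (-(1 / (p + 1)))) := by
      apply ff_anti p hp _ (convex_Icc _ _)
      intro z hz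
      rw [interior_Icc] at hz
      obtain ⟨hz1, hz2⟩ := hz
      refine ⟨by linarith, Or.inl ⟨by linarith, ?_⟩⟩
      rw [abs_of_pos (by linarith), abs_of_neg (by linarith)]
      have : (1 / (p + 1)) * (p + 1) = 1 := by field_simp
      nlinarith
    have hB : AntitoneOn (ff p) (Set.Iic (-1)) := by
      apply ff_anti p hp _ (convex_Iic _)
      intro z hz
      rw [interior_Iic] at hz
      have hz1 : z < -1 := hz
      refine ⟨by linarith, Or.inl ⟨by linarith, ?_⟩⟩
      rw [abs_of_neg (by linarith), abs_of_neg (by linarith)]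
      nlinarith
    have h3 : 0 ≤ ff p (-1) :=
      (ff_pos2 p hp).trans (hA ⟨le_rfl, by linarith⟩ ⟨by linarith, le_rfl⟩ (by linarith))
    rcases le_total x (-1) with hx1 | hx1
    · exact h3.trans (hB hx1 (Set.mem_Iic.mpr le_rfl) hx1)
    · exact (ff_pos2 p hp).trans (hA ⟨hx1, hx⟩ ⟨by linarith, le_rfl⟩ hx)
  rcases le_total x 0 with hx0 | hx0
  · have hA : MonotoneOn (ff p) (Set.Icc (-(1 / (p + 1))) 0) := by
      apply ff_mono p hp _ (convex_Icc _ _)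
      intro z hz
      rw [interior_Icc] at hz
      obtain ⟨hz1, hz2⟩ := hz
      refine ⟨by linarith, Or.inr ⟨by linarith, ?_⟩⟩
      rw [abs_of_pos (by linarith : 0 < 1 + z), abs_of_neg (by linarith)]
      have : (1 / (p + 1)) * (p + 1) = 1 := by field_simp
      nlinarith
    exact (ff_pos2 p hp).trans (hA ⟨le_rfl, by linarith⟩ ⟨hx, hx0⟩ hx)
  have hc : (1 / (p - 1)) * (p - 1) = 1 := by field_simp
  rcases le_total x (1 / (p - 1)) with hx1 | hx1
  · have hA : AntitoneOn (ff p) (Set.Icc 0 (1 / (p - 1))) := by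
      apply ff_anti p hp _ (convex_Icc _ _)
      intro z hz
      rw [interior_Icc] at hz
      obtain ⟨hz1, hz2⟩ := hz
      refine ⟨by linarith, Or.inr ⟨by linarith, ?_⟩⟩
      rw [abs_of_pos (by linarith : 0 < 1 + z), abs_of_pos (by linarith)]
      nlinarith
    exact (ff_pos1 p hp).trans (hA ⟨hx0, hx1⟩ ⟨hb.le, le_rfl⟩ hx1)
  · have hA : MonotoneOn (ff p) (Set.Ici (1 / (p - 1))) := by
      apply ff_mono p hp _ (convex_Ici _)
      intro z hz
      rw [interior_Ici] at hz
      have hz1 : 1 / (p - 1) < z := hz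
      refine ⟨by linarith, Or.inl ⟨by linarith, ?_⟩⟩
      rw [abs_of_pos (by linarith : 0 < 1 + z), abs_of_pos (by linarith)]
      nlinarith
    exact (ff_pos1 p hp).trans (hA (Set.mem_Ici.mpr le_rfl) hx1 hx1)

lemma pointwise (p : ℝ) (hp : 2 ≤ p) (x y : ℝ) :
    |y - x| ^ p ≤ (p - 1) ^ p * |x| ^ p - Kc p * (p * (|y| ^ (p - 2) * y) * x - |y| ^ p) := by
  rcases eq_or_ne y x with rfl | hne
  · rw [sub_self, abs_zero, Real.zero_rpow (by linarith)]
    have e := abs_rpow_sq p y hp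
    have h1 : (1:ℝ) ≤ p ^ (p - 2) := Real.one_le_rpow (by linarith) (by linarith)
    have h3 : 0 ≤ Kc p * (p - 1) * |y| ^ p :=
      mul_nonneg (mul_nonneg (Kc_nonneg p hp) (by linarith)) (by positivity)
    have h2 := Kc_mul p hp
    rw [← h2]
    have : p * (|y| ^ (p - 2) * y) * y = p * |y| ^ p := by rw [← e]; ring
    rw [this]
    nlinarith
  · obtain ⟨d, hd⟩ : ∃ d, d = y - x := ⟨_, rfl⟩
    have hd0 : d ≠ 0 := by rw [hd]; exact sub_ne_zero.mpr hne
    obtain ⟨u, hu⟩ : ∃ u, x = d * u := ⟨x / d, by field_simp⟩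
    have hy : y = d * (1 + u) := by linear_combination (-1) * hd + hu
    have hf := ff_nonneg p hp u
    rw [← hd, hy, hu]
    simp only [abs_mul]
    rw [Real.mul_rpow (abs_nonneg d) (abs_nonneg _), Real.mul_rpow (abs_nonneg d) (abs_nonneg _),
      Real.mul_rpow (abs_nonneg d) (abs_nonneg _)]
    have ed := abs_rpow_sq p d hp
    have eu := abs_rpow_sq p (1 + u) hp
    have hdp : 0 ≤ |d| ^ p := by positivity
    have := mul_nonneg hdp hf
    unfold ff at this
    rw [← eu, ← ed] at *
    nlinarith

lemma young (p : ℝ) (hp : 2 ≤ p) (u v : ℝ) :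
    |u| ^ p - |v| ^ p ≤ p * (|u| ^ (p - 2) * u) * (u - v) := by
  have h0 : 0 < p := by linarith
  have h := Real.geom_mean_le_arith_mean2_weighted (w₁ := 1 / p) (w₂ := (p - 1) / p)
    (p₁ := |v| ^ p) (p₂ := |u| ^ p) (by positivity) (div_nonneg (by linarith) h0.le)
    (by positivity) (by positivity) (by field_simp; ring)
  rw [← Real.rpow_mul (abs_nonneg v), ← Real.rpow_mul (abs_nonneg u), mul_one_div_cancel h0.ne',
    Real.rpow_one, mul_div_cancel₀ _ h0.ne'] at h
  have e := abs_rpow_sq p u hp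
  have e2 : |u| ^ (p - 1) = |u| ^ (p - 2) * |u| := by
    rcases eq_or_ne u 0 with rfl | hu
    · rw [abs_zero, Real.zero_rpow (by linarith)]; simp
    · rw [← Real.rpow_add_one (abs_pos.mpr hu).ne']; congr 1; ring
  have e3 : |u| ^ (p - 2) * u * v ≤ |v| * |u| ^ (p - 1) := by
    rw [e2]
    calc |u| ^ (p - 2) * u * v = |u| ^ (p - 2) * (u * v) := by ring
      _ ≤ |u| ^ (p - 2) * (|u| * |v|) := by
        apply mul_le_mul_of_nonneg_left _ (by positivity)
        rw [← abs_mul]; exact le_abs_self _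
      _ = _ := by ring
  have h' : p * (|v| * |u| ^ (p - 1)) ≤ |v| ^ p + (p - 1) * |u| ^ p := by
    calc _ ≤ p * (1 / p * |v| ^ p + (p - 1) / p * |u| ^ p) := mul_le_mul_of_nonneg_left h h0.le
      _ = _ := by field_simp
  have h'' := mul_le_mul_of_nonneg_left e3 h0.le
  have : p * (|u| ^ (p - 2) * u) * (u - v) = p * |u| ^ p - p * (|u| ^ (p - 2) * u * v) := by
    rw [← e]; ring
  linarith

lemma finite_ineq (p : ℝ) (hp : 2 ≤ p) (X Y : ℕ → ℝ) (N : ℕ)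
    (h : ∀ n < N, X n = ((n : ℝ) + 1) * (Y n - Y (n + 1))) :
    ∑ n ∈ Finset.range N, |Y n - X n| ^ p ≤
      (p - 1) ^ p * ∑ n ∈ Finset.range N, |X n| ^ p + Kc p * (N * |Y N| ^ p) := by
  induction N with
  | zero => simp
  | succ N ih =>
    have ih := ih (fun n hn => h n (by omega))
    rw [Finset.sum_range_succ, Finset.sum_range_succ]
    have h1 := pointwise p hp (X N) (Y N)
    have h2 := young p hp (Y N) (Y (N + 1))
    have hX := h N (by omega)
    have h3 : ((N : ℝ) + 1) * (|Y N| ^ p - |Y (N + 1)| ^ p) ≤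
        p * (|Y N| ^ (p - 2) * Y N) * X N := by
      rw [hX]
      calc _ ≤ ((N : ℝ) + 1) * _ := mul_le_mul_of_nonneg_left h2 (by positivity)
        _ = _ := by ring
    have h4 := mul_le_mul_of_nonneg_left h3 (Kc_nonneg p hp)
    push_cast
    nlinarith

lemma summable_div (p : ℝ) (hp : 2 ≤ p) (x : ℕ → ℝ) (hx : Summable fun n : ℕ => |x (n + 1)| ^ p) :
    Summable fun n : ℕ => x (n + 1) / ((n : ℝ) + 1) := by
  have hpq : p.HolderConjugate (Real.conjExponent p) := Real.HolderConjugate.conjExponent (by linarith)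
  have hq : 1 < Real.conjExponent p := hpq.symm.lt
  have hs : Summable fun n : ℕ => (1 / ((n : ℝ) + 1)) ^ (Real.conjExponent p) := by
    have := (summable_nat_add_iff 1).mpr (Real.summable_one_div_nat_rpow.mpr hq)
    refine this.congr fun n => ?_
    rw [Real.div_rpow (by positivity) (by positivity), Real.one_rpow]
    push_cast
    rfl
  refine Summable.of_norm_bounded ((hx.div_const p).add (hs.div_const (Real.conjExponent p))) ?_
  intro n
  have := Real.young_inequality_of_nonneg (abs_nonneg (x (n + 1)))
    (by positivity : 0 ≤ 1 / ((n : ℝ) + 1)) hpq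
  rw [Real.norm_eq_abs, abs_div, abs_of_pos (by positivity : 0 < (n : ℝ) + 1), div_eq_mul_one_div]
  exact this

lemma part1 (p : ℝ) (hp : 2 ≤ p) (x : ℕ → ℝ) (hx : Summable fun n : ℕ => |x (n + 1)| ^ p) (N : ℕ) :
    ∑ n ∈ Finset.range N, |(∑' k : ℕ, x (n + 1 + k) / ((n : ℝ) + 1 + k)) - x (n + 1)| ^ p
        ≤ (p - 1) ^ p * ∑' n : ℕ, |x (n + 1)| ^ p := by
  have hA : 0 ≤ (p - 1) ^ p := Real.rpow_nonneg (by linarith) _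
  have hs := summable_div p hp x hx
  let Y : ℕ → ℕ → ℝ := fun M n => ∑ k ∈ Finset.Ico n M, x (k + 1) / ((k : ℝ) + 1)
  have hlim : ∀ n, Filter.Tendsto (fun M => Y M n) Filter.atTop
      (nhds (∑' k : ℕ, x (n + 1 + k) / ((n : ℝ) + 1 + k))) := by
    intro n
    have h1 : Summable fun k : ℕ => x (n + 1 + k) / ((n : ℝ) + 1 + k) := by
      refine ((summable_nat_add_iff n).mpr hs).congr fun k => ?_
      rw [show k + n + 1 = n + 1 + k by ring]
      push_cast
      rw [show (k : ℝ) + n + 1 = n + 1 + k by ring]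
    have h2 := h1.hasSum.tendsto_sum_nat.comp (Filter.tendsto_sub_atTop_nat n)
    refine h2.congr fun M => ?_
    simp only [Function.comp, Y]
    rw [Finset.sum_Ico_eq_sum_range]
    refine Finset.sum_congr rfl fun k _ => ?_
    rw [show n + k + 1 = n + 1 + k by ring]
    push_cast
    rw [show (n : ℝ) + k + 1 = n + 1 + k by ring]
  have hl2 : Filter.Tendsto (fun M => ∑ n ∈ Finset.range N, |Y M n - x (n + 1)| ^ p) Filter.atTop
      (nhds (∑ n ∈ Finset.range N,
        |(∑' k : ℕ, x (n + 1 + k) / ((n : ℝ) + 1 + k)) - x (n + 1)| ^ p)) := by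
    refine tendsto_finsetSum _ fun n _ => ?_
    exact (((hlim n).sub_const _).abs).rpow_const (Or.inr (by linarith))
  refine le_of_tendsto hl2 ?_
  filter_upwards [Filter.eventually_ge_atTop N] with M hM
  calc _ ≤ ∑ n ∈ Finset.range M, |Y M n - x (n + 1)| ^ p :=
        Finset.sum_le_sum_of_subset_of_nonneg (Finset.range_mono hM)
          (fun _ _ _ => by positivity)
    _ ≤ _ := finite_ineq p hp (fun n => x (n + 1)) (Y M) M (by
        intro n hn
        simp only [Y]
        rw [Finset.sum_eq_sum_Ico_succ_bot hn]
        field_simp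
        ring)
    _ = (p - 1) ^ p * ∑ n ∈ Finset.range M, |x (n + 1)| ^ p := by
        simp only [Y, Finset.Ico_self, Finset.sum_empty, abs_zero]
        rw [Real.zero_rpow (by linarith)]
        simp
    _ ≤ _ := mul_le_mul_of_nonneg_left
        (hx.sum_le_tsum _ (fun _ _ => by positivity)) hA

lemma step_le (a : ℝ) (ha : 0 < a) (t : ℝ) (ht : 0 < t) :
    (t ^ (-a) - (t + 1) ^ (-a)) / a ≤ t ^ (-a) / t := by
  have e : (t + 1) ^ (-a) = t ^ (-a) * (1 + 1 / t) ^ (-a) := by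
    rw [← Real.mul_rpow ht.le (by positivity)]
    congr 1
    field_simp
  have h1 : 1 - a / t ≤ (1 + 1 / t) ^ (-a) := by
    have hp : 0 < 1 + 1 / t := by positivity
    rw [Real.rpow_def_of_pos hp]
    have h2 := Real.add_one_le_exp (Real.log (1 + 1 / t) * -a)
    have h3 := Real.log_le_sub_one_of_pos hp
    have h4 : Real.log (1 + 1 / t) * a ≤ 1 / t * a :=
      mul_le_mul_of_nonneg_right (by linarith) ha.le
    have : 1 / t * a = a / t := by ring
    linarith
  have h5 : 0 < t ^ (-a) := by positivity
  rw [div_le_iff₀ ha, e]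
  have := mul_le_mul_of_nonneg_left h1 h5.le
  calc _ = t ^ (-a) - t ^ (-a) * (1 + 1 / t) ^ (-a) := rfl
    _ ≤ t ^ (-a) - t ^ (-a) * (1 - a / t) := by linarith
    _ = _ := by ring

lemma tail_ge (a : ℝ) (ha : 0 < a) (t : ℝ) (ht : 0 < t)
    (hs : Summable fun k : ℕ => (t + k) ^ (-a) / (t + k)) :
    t ^ (-a) / a ≤ ∑' k : ℕ, (t + k) ^ (-a) / (t + k) := by
  have h1 : ∀ N : ℕ, (t ^ (-a) - (t + N) ^ (-a)) / a ≤
      ∑ k ∈ Finset.range N, (t + k) ^ (-a) / (t + k) := by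
    intro N
    induction N with
    | zero => simp
    | succ N ih =>
      rw [Finset.sum_range_succ]
      have := step_le a ha (t + N) (by positivity)
      push_cast
      rw [← add_assoc]
      have e : (t ^ (-a) - (t + N + 1) ^ (-a)) / a =
        (t ^ (-a) - (t + N) ^ (-a)) / a + ((t + N) ^ (-a) - (t + N + 1) ^ (-a)) / a := by ring
      linarith
  have h2 : Filter.Tendsto (fun N : ℕ => (t ^ (-a) - (t + N) ^ (-a)) / a) Filter.atTop
      (nhds ((t ^ (-a) - 0) / a)) := by
    refine Filter.Tendsto.div_const (Filter.Tendsto.const_sub _ ?_) _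
    exact (tendsto_rpow_neg_atTop ha).comp
      (Filter.tendsto_atTop_add_const_left _ t tendsto_natCast_atTop_atTop)
  rw [sub_zero] at h2
  exact le_of_tendsto_of_tendsto' h2 hs.hasSum.tendsto_sum_nat h1

lemma exists_a (p : ℝ) (hp : 2 ≤ p) (c : ℝ) (hc : c < (p - 1) ^ p) :
    ∃ a : ℝ, 1 / p < a ∧ a < 1 ∧ c < (1 / a - 1) ^ p := by
  have h0 : 0 < p := by linarith
  have hcont : ContinuousAt (fun a : ℝ => (1 / a - 1) ^ p) (1 / p) := by
    refine ContinuousAt.rpow_const ?_ (Or.inr h0.le)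
    refine ContinuousAt.sub (ContinuousAt.div continuousAt_const continuousAt_id ?_) continuousAt_const
    exact (by positivity : 1 / p ≠ 0)
  have h1 : ∀ᶠ a in nhds (1 / p), c < (1 / a - 1) ^ p := by
    apply hcont.eventually (lt_mem_nhds _)
    simpa using hc
  have h2 : ∀ᶠ a in nhds (1 / p), a < 1 :=
    gt_mem_nhds (by rw [div_lt_one h0]; linarith)
  have h3 : ∀ᶠ a in nhdsWithin (1 / p) (Set.Ioi (1 / p)), 1 / p < a := self_mem_nhdsWithin
  obtain ⟨a, ⟨ha1, ha2⟩, ha3⟩ :=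
    (((h1.and h2).filter_mono nhdsWithin_le_nhds).and h3).exists
  exact ⟨a, ha3, ha2, ha1⟩



/-- Theorem 2, first part: for `2 ≤ p < ∞`, the operator norm of `C^T - I` on `ℓ^p` equals
`p - 1`: the inequality `∑ |y_n - x_n|^p ≤ (p-1)^p ∑ |x_n|^p` holds with
`y_n = ∑_{k=n}^∞ x_k/k`, and `(p-1)^p` is the least such constant. (Sequences are indexed
so that term `n` of the paper is `x (n+1)` here, `n : ℕ`.) -/
theorem stmt5 (p : ℝ) (hp : 2 ≤ p) :
    (∀ x : ℕ → ℝ, (Summable fun n : ℕ => |x (n + 1)| ^ p) →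
      ∑' n : ℕ, |(∑' k : ℕ, x (n + 1 + k) / ((n : ℝ) + 1 + k)) - x (n + 1)| ^ p
        ≤ (p - 1) ^ p * ∑' n : ℕ, |x (n + 1)| ^ p) ∧
    ∀ c : ℝ, c < (p - 1) ^ p → ∃ x : ℕ → ℝ,
      (Summable fun n : ℕ => |x (n + 1)| ^ p) ∧
      0 < ∑' n : ℕ, |x (n + 1)| ^ p ∧
      c * ∑' n : ℕ, |x (n + 1)| ^ p <
        ∑' n : ℕ, |(∑' k : ℕ, x (n + 1 + k) / ((n : ℝ) + 1 + k)) - x (n + 1)| ^ p := by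

  constructor
  · intro x hx
    exact Real.tsum_le_of_sum_range_le (fun n => by positivity) (part1 p hp x hx)
  · intro c hc
    obtain ⟨a, ha1, ha2, hac⟩ := exists_a p hp c hc
    have h0 : 0 < p := by linarith
    have ha : 0 < a := lt_trans (by positivity) ha1
    let x : ℕ → ℝ := fun n => (n : ℝ) ^ (-a)
    have hxs : Summable fun n : ℕ => |x (n + 1)| ^ p := by
      have hap : 1 < a * p := by rwa [div_lt_iff₀ h0] at ha1
      have := (summable_nat_add_iff 1).mpr (Real.summable_nat_rpow.mpr (neg_lt_neg hap))
      refine this.congr fun n => ?_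
      simp only [x]
      rw [abs_of_nonneg (by positivity), ← Real.rpow_mul (by positivity), neg_mul]
    have hpos : 0 < ∑' n : ℕ, |x (n + 1)| ^ p := by
      refine hxs.tsum_pos (fun n => by positivity) 0 ?_
      simp [x]
    have hsum := summable_of_sum_range_le (fun n => by positivity) (part1 p hp x hxs)
    have hs := summable_div p hp x hxs
    have ha3 : 0 ≤ 1 / a - 1 := by
      rw [sub_nonneg, le_div_iff₀ ha]; linarith
    refine ⟨x, hxs, hpos, ?_⟩
    calc _ < (1 / a - 1) ^ p * ∑' n : ℕ, |x (n + 1)| ^ p := mul_lt_mul_of_pos_right hac hpos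
      _ = ∑' n : ℕ, (1 / a - 1) ^ p * |x (n + 1)| ^ p := tsum_mul_left.symm
      _ ≤ _ := by
        refine (hxs.mul_left _).tsum_le_tsum (fun n => ?_) hsum
        rw [← Real.mul_rpow ha3 (abs_nonneg _)]
        refine Real.rpow_le_rpow (mul_nonneg ha3 (abs_nonneg _)) ?_ h0.le
        refine le_trans ?_ (le_abs_self _)
        have hx1 : x (n + 1) = ((n : ℝ) + 1) ^ (-a) := by simp [x]
        have hfun : (fun k : ℕ => x (n + 1 + k) / ((n : ℝ) + 1 + k)) =
            fun k : ℕ => ((n : ℝ) + 1 + k) ^ (-a) / ((n : ℝ) + 1 + k) := by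
          funext k; simp [x]
        have hs1 : Summable fun k : ℕ => ((n : ℝ) + 1 + k) ^ (-a) / ((n : ℝ) + 1 + k) := by
          rw [← hfun]
          refine ((summable_nat_add_iff n).mpr hs).congr fun k => ?_
          rw [show k + n + 1 = n + 1 + k by ring]
          push_cast
          rw [show (k : ℝ) + n + 1 = n + 1 + k by ring]
        have ht := tail_ge a ha ((n : ℝ) + 1) (by positivity) hs1
        rw [hfun, hx1, abs_of_pos (by positivity)]
        have e : (1 / a - 1) * ((n : ℝ) + 1) ^ (-a) =
          ((n : ℝ) + 1) ^ (-a) / a - ((n : ℝ) + 1) ^ (-a) := by ring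
        linarith
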